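/- Let X, Y be real Banach spaces, U ⊆ X and V ⊆ Y open, g : U → ℝ of class C^{1,1} on a neighborhood of x ∈ U, and F : U → V a C^{1,1}-diffeomorphism; set f = g ∘ F⁻¹ : V → ℝ. Then for every h ∈ ker g'(x): D̲²₊f(F(x),(F'(x)h)²) ≤ D̲²₊g(x,h²) − D̲²₊(y ↦ g'(x)(F'(x)⁻¹F(y)))(x,h²), and D̄²₊f(F(x),(F'(x)h)²) ≥ D̲²₊g(x,h²) − D̲²₊(y ↦ g'(x)(F'(x)⁻¹F(y)))(x,h²). -/

import Mathlib

open Filter Topology Metric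

/-- Lower right generalized second-order directional derivative
`D̲²₊f(x,h,k) = liminf_{t↓0} (f'(x+th)k − f'(x)k)/t`. -/
noncomputable def lowD2p {X : Type*} [NormedAddCommGroup X] [NormedSpace ℝ X]
    (f : X → ℝ) (x h k : X) : ℝ :=
  liminf (fun t : ℝ => (fderiv ℝ f (x + t • h) k - fderiv ℝ f x k) / t) (𝓝[>] (0:ℝ))

/-- Upper right generalized second-order directional derivative
`D̄²₊f(x,h,k) = limsup_{t↓0} (f'(x+th)k − f'(x)k)/t`. -/
noncomputable def upD2p {X : Type*} [NormedAddCommGroup X] [NormedSpace ℝ X]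
    (f : X → ℝ) (x h k : X) : ℝ :=
  limsup (fun t : ℝ => (fderiv ℝ f (x + t • h) k - fderiv ℝ f x k) / t) (𝓝[>] (0:ℝ))

/-- `F : U → V` is a `C^{1,1}`-diffeomorphism with inverse `G`. -/
def IsC11DiffeoOn {X Y : Type*} [NormedAddCommGroup X] [NormedSpace ℝ X]
    [NormedAddCommGroup Y] [NormedSpace ℝ Y]
    (F : X → Y) (G : Y → X) (U : Set X) (V : Set Y) : Prop :=
  Set.MapsTo F U V ∧ Set.MapsTo G V U ∧
    (∀ x ∈ U, G (F x) = x) ∧ (∀ y ∈ V, F (G y) = y) ∧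
    ContDiffOn ℝ 1 F U ∧
    (∀ x ∈ U, ∃ ε > 0, ∃ L : NNReal,
      LipschitzOnWith L (fun y => fderiv ℝ F y) (ball x ε ∩ U)) ∧
    ContDiffOn ℝ 1 G V ∧
    (∀ y ∈ V, ∃ ε > 0, ∃ L : NNReal,
      LipschitzOnWith L (fun z => fderiv ℝ G z) (ball y ε ∩ V))

/-!
Write `f = g ∘ F⁻¹`, so that `g = f ∘ F` near `x`. With `A = F'(x)` and `u = x + th`, the chain rule
`(f ∘ F)' = f'(F ·) F'` gives

`(g'(u) - g'(x))k - (f'(F x + tAh) - f'(F x))Ak - f'(F x)(F'(u) - A)k`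
`  = (f'(F u) - f'(F x + tAh))Ak + (f'(F u) - f'(F x))(F'(u) - A)k`,

and the right-hand side is `o(t)`: `f'` is Lipschitz and `F u - (F x + tAh) = o(t)`, while
`f'(F u) - f'(F x) = o(1)` and `F'(u) - A = O(t)`. Dividing by `t`, the difference quotient of `g'`
is, up to `o(1)`, the sum of those of `f'` and of the derivative of `f'(F x) ∘ F = g'(x) F'(x)⁻¹ F`.
All three are bounded, so `liminf a + liminf b ≤ liminf (a + b) ≤ limsup a + liminf b` concludes.
-/

section

open Asymptotics

lemma liminf_eq_of_tendsto_sub_zero {ι : Type*} {l : Filter ι} [NeBot l] {u v : ι → ℝ}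
    (hv_le : IsBoundedUnder (· ≤ ·) l v) (hv_ge : IsBoundedUnder (· ≥ ·) l v)
    (huv : Tendsto (u - v) l (𝓝 0)) : liminf u l = liminf v l := by
  have lower := le_liminf_add huv.isBoundedUnder_ge huv.isBoundedUnder_le hv_ge
    hv_le.isCoboundedUnder_ge
  have upper := liminf_add_le huv.isBoundedUnder_ge huv.isBoundedUnder_le hv_ge
    hv_le.isCoboundedUnder_ge
  rw [sub_add_cancel, huv.liminf_eq, zero_add] at lower
  rw [sub_add_cancel, huv.limsup_eq, zero_add] at upper
  exact upper.antisymm lower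

variable {X Y Z : Type*} [NormedAddCommGroup X] [NormedSpace ℝ X]
  [NormedAddCommGroup Y] [NormedSpace ℝ Y] [NormedAddCommGroup Z] [NormedSpace ℝ Z]

lemma isBigO_clm_apply_const {ι : Type*} {l : Filter ι} {T : ι → X →L[ℝ] Y} (k : X) :
    (fun i => T i k) =O[l] T :=
  .of_bound ‖k‖ (.of_forall fun i => ((T i).le_opNorm k).trans_eq (mul_comm ‖T i‖ ‖k‖))

lemma isBigO_clm_comp {ι : Type*} {l : Filter ι} {S : ι → Y →L[ℝ] Z} {T : ι → X →L[ℝ] Y} :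
    (fun i => (S i).comp (T i)) =O[l] (fun i => ‖S i‖ * ‖T i‖) :=
  .of_norm_le fun i => ContinuousLinearMap.opNorm_comp_le (S i) (T i)

lemma tendsto_add_smul (x h : X) : Tendsto (fun t : ℝ => x + t • h) (𝓝 0) (𝓝 x) := by
  have : Continuous fun t : ℝ => x + t • h := by fun_prop
  simpa using this.tendsto 0

lemma isBigO_add_smul_sub (x h : X) : (fun t : ℝ => x + t • h - x) =O[𝓝 0] (fun t : ℝ => t) := by
  refine .of_bound ‖h‖ (.of_forall fun t => ?_)
  rw [add_sub_cancel_left, norm_smul, mul_comm]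

lemma isLittleO_comp_line_sub {F : X → Y} {F' : X →L[ℝ] Y} {x : X} (hF : HasFDerivAt F F' x)
    (h : X) : (fun t : ℝ => F (x + t • h) - (F x + t • F' h)) =o[𝓝 0] (fun t : ℝ => t) := by
  refine ((hF.isLittleO.comp_tendsto (tendsto_add_smul x h)).trans_isBigO
    (isBigO_add_smul_sub x h)).congr_left fun t => ?_
  simp [sub_sub]

/-- `f` is of class `C^{1,1}` near `x`: it is `C¹` near `x` with a derivative that is Lipschitz on
some neighborhood of `x`. The Lipschitz condition is stated as a big-O over pairs of points tending
to `x`, so that it composes with other asymptotic estimates. -/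
structure C11At (f : X → Y) (x : X) : Prop where
  contDiffAt : ContDiffAt ℝ 1 f x
  isBigO_fderiv_sub_pair :
    (fun p : X × X => fderiv ℝ f p.1 - fderiv ℝ f p.2) =O[𝓝 (x, x)] (fun p => p.1 - p.2)

/-- The increment `f'(x + th)k - f'(x)k`, as a function of `t`: the lower and upper limits of its
quotients by `t` are `lowD2p f x h k` and `upD2p f x h k`. -/
noncomputable def derivIncrement (f : X → Y) (x h k : X) (t : ℝ) : Y :=
  fderiv ℝ f (x + t • h) k - fderiv ℝ f x k

lemma derivIncrement_eventuallyEq {f g : X → Y} {x : X} (hfg : f =ᶠ[𝓝 x] g) (h k : X) :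
    derivIncrement f x h k =ᶠ[𝓝 0] derivIncrement g x h k := by
  filter_upwards [(tendsto_add_smul x h).eventually (hfg.fderiv (𝕜 := ℝ))] with t ht
  rw [derivIncrement, derivIncrement, ht, hfg.fderiv_eq]

lemma lowD2p_congr {f g : X → ℝ} {x : X} (hfg : f =ᶠ[𝓝 x] g) (h k : X) :
    lowD2p f x h k = lowD2p g x h k :=
  liminf_congr <| nhdsWithin_le_nhds <|
    (derivIncrement_eventuallyEq hfg h k).div (EventuallyEq.refl _ fun t => t)

namespace C11At

lemma of_mem_nhds {f : X → Y} {x : X} {s : Set X} {L : NNReal} (hs : s ∈ 𝓝 x)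
    (hf : ContDiffOn ℝ 1 f s) (hL : LipschitzOnWith L (fderiv ℝ f) s) : C11At f x := by
  refine ⟨hf.contDiffAt hs, .of_bound L ?_⟩
  filter_upwards [prod_mem_nhds hs hs] with p hp using hL.norm_sub_le hp.1 hp.2

lemma of_clm (T : X →L[ℝ] Y) (x : X) : C11At T x := by
  refine ⟨T.contDiff.contDiffAt, (isBigO_zero _ _).congr_left fun p => ?_⟩
  rw [T.fderiv, T.fderiv, sub_self]

lemma differentiableAt {f : X → Y} {x : X} (hf : C11At f x) : DifferentiableAt ℝ f x :=
  hf.contDiffAt.differentiableAt one_ne_zero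

lemma continuousAt {f : X → Y} {x : X} (hf : C11At f x) : ContinuousAt f x :=
  hf.contDiffAt.continuousAt

lemma continuousAt_fderiv {f : X → Y} {x : X} (hf : C11At f x) : ContinuousAt (fderiv ℝ f) x :=
  hf.contDiffAt.continuousAt_fderiv one_ne_zero

lemma eventually_differentiableAt {f : X → Y} {x : X} (hf : C11At f x) :
    ∀ᶠ w in 𝓝 x, DifferentiableAt ℝ f w :=
  (hf.contDiffAt.eventually (by simp)).mono fun _ hw => hw.differentiableAt one_ne_zero

lemma isBigO_fderiv_sub {ι : Type*} {l : Filter ι} {u v : ι → X} {f : X → Y} {x : X}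
    (hf : C11At f x) (hu : Tendsto u l (𝓝 x)) (hv : Tendsto v l (𝓝 x)) :
    (fun i => fderiv ℝ f (u i) - fderiv ℝ f (v i)) =O[l] (fun i => u i - v i) :=
  hf.isBigO_fderiv_sub_pair.comp_tendsto (hu.prodMk_nhds hv)

lemma isBigO_fderiv_line_sub {f : X → Y} {x : X} (hf : C11At f x) (h : X) :
    (fun t : ℝ => fderiv ℝ f (x + t • h) - fderiv ℝ f x) =O[𝓝 0] (fun t : ℝ => t) :=
  (hf.isBigO_fderiv_sub (tendsto_add_smul x h) tendsto_const_nhds).trans (isBigO_add_smul_sub x h)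

lemma isBigO_derivIncrement {f : X → Y} {x : X} (hf : C11At f x) (h k : X) :
    derivIncrement f x h k =O[𝓝 0] (fun t : ℝ => t) :=
  (isBigO_clm_apply_const k).trans (hf.isBigO_fderiv_line_sub h)

lemma isBoundedUnder_derivIncrement_div {f : X → ℝ} {x : X} (hf : C11At f x) (h k : X) :
    IsBoundedUnder (· ≤ ·) (𝓝[>] 0) (fun t => derivIncrement f x h k t / t) ∧
      IsBoundedUnder (· ≥ ·) (𝓝[>] 0) (fun t => derivIncrement f x h k t / t) :=
  isBoundedUnder_le_abs.1 <|
    div_isBoundedUnder_of_isBigO ((hf.isBigO_derivIncrement h k).mono nhdsWithin_le_nhds)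

section Comp

variable {f : Y → Z} {F : X → Y} {x : X}

lemma eventually_fderiv_comp (hf : C11At f (F x)) (hF : C11At F x) :
    ∀ᶠ w in 𝓝 x, fderiv ℝ (f ∘ F) w = (fderiv ℝ f (F w)).comp (fderiv ℝ F w) := by
  filter_upwards [hF.eventually_differentiableAt,
    hF.continuousAt.eventually hf.eventually_differentiableAt] with w hFw hfw
  exact fderiv_comp w hfw hFw

lemma comp (hf : C11At f (F x)) (hF : C11At F x) : C11At (f ∘ F) x := by
  refine ⟨hf.contDiffAt.comp x hF.contDiffAt, ?_⟩
  have fst_tendsto : Tendsto Prod.fst (𝓝 (x, x)) (𝓝 x) := continuous_fst.tendsto _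
  have snd_tendsto : Tendsto Prod.snd (𝓝 (x, x)) (𝓝 x) := continuous_snd.tendsto _
  have F_lipschitz := (hF.contDiffAt.hasStrictFDerivAt one_ne_zero).isBigO_sub
  have outer : (fun p : X × X => fderiv ℝ f (F p.1) - fderiv ℝ f (F p.2)) =O[𝓝 (x, x)]
      (fun p => p.1 - p.2) :=
    (hf.isBigO_fderiv_sub (hF.continuousAt.tendsto.comp fst_tendsto)
      (hF.continuousAt.tendsto.comp snd_tendsto)).trans F_lipschitz
  have comp_lipschitz := ((isBoundedBilinearMap_comp (𝕜 := ℝ) (E := X) (F := Y)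
    (G := Z)).hasStrictFDerivAt (fderiv ℝ f (F x), fderiv ℝ F x)).isBigO_sub
  have pair_tendsto : Tendsto (fun w => (fderiv ℝ f (F w), fderiv ℝ F w)) (𝓝 x)
      (𝓝 (fderiv ℝ f (F x), fderiv ℝ F x)) :=
    (hf.continuousAt_fderiv.tendsto.comp hF.continuousAt).prodMk_nhds hF.continuousAt_fderiv
  refine ((comp_lipschitz.comp_tendsto ((pair_tendsto.comp fst_tendsto).prodMk_nhds
    (pair_tendsto.comp snd_tendsto))).trans
      (outer.prod_left hF.isBigO_fderiv_sub_pair)).congr' ?_ .rfl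
  have chain := eventually_fderiv_comp hf hF
  filter_upwards [fst_tendsto.eventually chain, snd_tendsto.eventually chain] with p h₁ h₂
  rw [h₁, h₂]
  rfl

theorem isLittleO_derivIncrement_comp (hf : C11At f (F x)) (hF : C11At F x) (h k : X) :
    (fun t => derivIncrement (f ∘ F) x h k t -
      (derivIncrement f (F x) (fderiv ℝ F x h) (fderiv ℝ F x k) t +
        derivIncrement (fderiv ℝ f (F x) ∘ F) x h k t)) =o[𝓝 0] (fun t : ℝ => t) := by
  have line_tendsto := tendsto_add_smul x h
  have curve_tendsto : Tendsto (fun t : ℝ => F (x + t • h)) (𝓝 0) (𝓝 (F x)) :=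
    hF.continuousAt.tendsto.comp line_tendsto
  have along_curve : (fun t : ℝ => fderiv ℝ f (F (x + t • h)) -
      fderiv ℝ f (F x + t • fderiv ℝ F x h)) =o[𝓝 0] (fun t : ℝ => t) :=
    (hf.isBigO_fderiv_sub curve_tendsto (tendsto_add_smul _ _)).trans_isLittleO
      (isLittleO_comp_line_sub hF.differentiableAt.hasFDerivAt h)
  have outer_vanishes : (fun t : ℝ => fderiv ℝ f (F (x + t • h)) - fderiv ℝ f (F x))
      =o[𝓝 0] (fun _ => (1 : ℝ)) :=
    (isLittleO_one_iff ℝ).2 <| tendsto_sub_nhds_zero_iff.2 <|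
      hf.continuousAt_fderiv.tendsto.comp curve_tendsto
  have mixed : (fun t : ℝ => (fderiv ℝ f (F (x + t • h)) - fderiv ℝ f (F x)).comp
      (fderiv ℝ F (x + t • h) - fderiv ℝ F x)) =o[𝓝 0] (fun t : ℝ => t) := by
    simpa only [one_mul] using isBigO_clm_comp.trans_isLittleO
      (outer_vanishes.norm_left.mul_isBigO (hF.isBigO_fderiv_line_sub h).norm_left)
  refine (((isBigO_clm_apply_const (fderiv ℝ F x k)).trans_isLittleO along_curve).add
    ((isBigO_clm_apply_const k).trans_isLittleO mixed)).congr' ?_ .rfl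
  have chain := eventually_fderiv_comp hf hF
  have chain_clm := eventually_fderiv_comp (of_clm (fderiv ℝ f (F x)) (F x)) hF
  filter_upwards [line_tendsto.eventually chain, line_tendsto.eventually chain_clm] with t ht ht_clm
  simp only [derivIncrement, ht, ht_clm, chain.self_of_nhds, chain_clm.self_of_nhds,
    ContinuousLinearMap.fderiv, ContinuousLinearMap.comp_apply, _root_.sub_apply, map_sub]
  abel

end Comp

lemma clm_comp {F : X → Y} {x : X} (hF : C11At F x) (T : Y →L[ℝ] Z) : C11At (T ∘ F) x :=
  (of_clm T (F x)).comp hF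

section LowerUpper

variable {f : Y → ℝ} {F : X → Y} {x : X}

lemma lowD2p_comp_eq_liminf_add (hf : C11At f (F x)) (hF : C11At F x) (h k : X) :
    lowD2p (f ∘ F) x h k = liminf
      ((fun t => derivIncrement f (F x) (fderiv ℝ F x h) (fderiv ℝ F x k) t / t) +
        fun t => derivIncrement (fderiv ℝ f (F x) ∘ F) x h k t / t) (𝓝[>] 0) := by
  have f_bdd := hf.isBoundedUnder_derivIncrement_div (fderiv ℝ F x h) (fderiv ℝ F x k)
  have clm_bdd := (hF.clm_comp (fderiv ℝ f (F x))).isBoundedUnder_derivIncrement_div h k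
  refine liminf_eq_of_tendsto_sub_zero (isBoundedUnder_le_add f_bdd.1 clm_bdd.1)
    (isBoundedUnder_ge_add f_bdd.2 clm_bdd.2) ?_
  refine ((isLittleO_derivIncrement_comp hf hF h k).mono
    nhdsWithin_le_nhds).tendsto_div_nhds_zero.congr fun t => ?_
  rw [sub_div, add_div]
  rfl

lemma lowD2p_add_le_lowD2p_comp (hf : C11At f (F x)) (hF : C11At F x) (h k : X) :
    lowD2p f (F x) (fderiv ℝ F x h) (fderiv ℝ F x k) + lowD2p (fderiv ℝ f (F x) ∘ F) x h k ≤
      lowD2p (f ∘ F) x h k := by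
  have f_bdd := hf.isBoundedUnder_derivIncrement_div (fderiv ℝ F x h) (fderiv ℝ F x k)
  have clm_bdd := (hF.clm_comp (fderiv ℝ f (F x))).isBoundedUnder_derivIncrement_div h k
  rw [lowD2p_comp_eq_liminf_add hf hF]
  exact le_liminf_add f_bdd.2 f_bdd.1 clm_bdd.2 clm_bdd.1.isCoboundedUnder_ge

lemma lowD2p_comp_le_upD2p_add (hf : C11At f (F x)) (hF : C11At F x) (h k : X) :
    lowD2p (f ∘ F) x h k ≤
      upD2p f (F x) (fderiv ℝ F x h) (fderiv ℝ F x k) + lowD2p (fderiv ℝ f (F x) ∘ F) x h k := by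
  have f_bdd := hf.isBoundedUnder_derivIncrement_div (fderiv ℝ F x h) (fderiv ℝ F x k)
  have clm_bdd := (hF.clm_comp (fderiv ℝ f (F x))).isBoundedUnder_derivIncrement_div h k
  rw [lowD2p_comp_eq_liminf_add hf hF]
  exact liminf_add_le f_bdd.2 f_bdd.1 clm_bdd.2 clm_bdd.1.isCoboundedUnder_ge

end LowerUpper

end C11At

lemma fderiv_comp_fderiv_of_eventually_leftInverse {F : X → Y} {G : Y → X} {x : X}
    (hF : DifferentiableAt ℝ F x) (hG : DifferentiableAt ℝ G (F x)) (hGF : G ∘ F =ᶠ[𝓝 x] id) :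
    (fderiv ℝ G (F x)).comp (fderiv ℝ F x) = ContinuousLinearMap.id ℝ X := by
  rw [← fderiv_comp x hG hF, hGF.fderiv_eq, fderiv_id]

lemma fderiv_eq_of_eventually_leftInverse {F : X → Y} {G : Y → X} {x : X} {A : Y →L[ℝ] X}
    (hF : DifferentiableAt ℝ F x) (hG : DifferentiableAt ℝ G (F x)) (hGF : G ∘ F =ᶠ[𝓝 x] id)
    (hA : (fderiv ℝ F x).comp A = ContinuousLinearMap.id ℝ Y) : fderiv ℝ G (F x) = A := by
  calc fderiv ℝ G (F x) = (fderiv ℝ G (F x)).comp ((fderiv ℝ F x).comp A) := by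
        rw [hA, ContinuousLinearMap.comp_id]
    _ = A := by
        rw [← ContinuousLinearMap.comp_assoc,
          fderiv_comp_fderiv_of_eventually_leftInverse hF hG hGF, ContinuousLinearMap.id_comp]

namespace IsC11DiffeoOn

variable {F : X → Y} {G : Y → X} {U : Set X} {V : Set Y} {x : X}

lemma symm (hF : IsC11DiffeoOn F G U V) : IsC11DiffeoOn G F V U := by
  obtain ⟨hFU, hGV, hGF, hFG, hF₁, hF_lip, hG₁, hG_lip⟩ := hF
  exact ⟨hGV, hFU, hFG, hGF, hG₁, hG_lip, hF₁, hF_lip⟩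

lemma c11At (hF : IsC11DiffeoOn F G U V) (hU : IsOpen U) (hx : x ∈ U) : C11At F x := by
  obtain ⟨-, -, -, -, hF₁, hF_lip, -⟩ := hF
  obtain ⟨ε, hε, L, hL⟩ := hF_lip x hx
  exact .of_mem_nhds (inter_mem (ball_mem_nhds x hε) (hU.mem_nhds hx))
    (hF₁.mono Set.inter_subset_right) hL

lemma eventually_leftInverse (hF : IsC11DiffeoOn F G U V) (hU : IsOpen U) (hx : x ∈ U) :
    G ∘ F =ᶠ[𝓝 x] id :=
  mem_of_superset (hU.mem_nhds hx) hF.2.2.1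

lemma fderiv_inverse_eq (hF : IsC11DiffeoOn F G U V) (hU : IsOpen U) (hV : IsOpen V) (hx : x ∈ U)
    {A : Y →L[ℝ] X} (hA : (fderiv ℝ F x).comp A = ContinuousLinearMap.id ℝ Y) :
    fderiv ℝ G (F x) = A :=
  fderiv_eq_of_eventually_leftInverse (hF.c11At hU hx).differentiableAt
    (hF.symm.c11At hV (hF.1 hx)).differentiableAt (hF.eventually_leftInverse hU hx) hA

end IsC11DiffeoOn

theorem stmt_19_general {F : X → Y} {G : Y → X} {g : X → ℝ} {x : X} (hF : C11At F x)
    (hG : C11At G (F x)) (hGF : G ∘ F =ᶠ[𝓝 x] id) (hg : C11At g x) (h k : X) :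
    lowD2p (g ∘ G) (F x) (fderiv ℝ F x h) (fderiv ℝ F x k) ≤
        lowD2p g x h k - lowD2p (fun y => fderiv ℝ g x (fderiv ℝ G (F x) (F y))) x h k ∧
      lowD2p g x h k - lowD2p (fun y => fderiv ℝ g x (fderiv ℝ G (F x) (F y))) x h k ≤
        upD2p (g ∘ G) (F x) (fderiv ℝ F x h) (fderiv ℝ F x k) := by
  have hGFx : G (F x) = x := hGF.eq_of_nhds
  have hg' : C11At g (G (F x)) := hGFx.symm ▸ hg
  have hf : C11At (g ∘ G) (F x) := hg'.comp hG
  have g_eq : lowD2p g x h k = lowD2p ((g ∘ G) ∘ F) x h k :=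
    lowD2p_congr (hGF.fun_comp g).symm h k
  have clm_eq : (fun y => fderiv ℝ g x (fderiv ℝ G (F x) (F y))) =
      fderiv ℝ (g ∘ G) (F x) ∘ F := by
    rw [fderiv_comp _ hg'.differentiableAt hG.differentiableAt, hGFx]
    rfl
  rw [g_eq, clm_eq, le_sub_iff_add_le, sub_le_iff_le_add]
  exact ⟨hf.lowD2p_add_le_lowD2p_comp hF h k, hf.lowD2p_comp_le_upD2p_add hF h k⟩

end

/-- Let `X, Y` be real Banach spaces, `U ⊆ X` and `V ⊆ Y` open, `g : U → ℝ`
of class `C^{1,1}` on a neighborhood of `x ∈ U`, and `F : U → V` a `C^{1,1}`-diffeomorphism;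
set `f = g ∘ F⁻¹`.  Then for every `h ∈ ker g'(x)`:
`D̲²₊f(F(x),(F'(x)h)²) ≤ D̲²₊g(x,h²) − D̲²₊(y ↦ g'(x)(F'(x)⁻¹F(y)))(x,h²)` and
`D̄²₊f(F(x),(F'(x)h)²) ≥ D̲²₊g(x,h²) − D̲²₊(y ↦ g'(x)(F'(x)⁻¹F(y)))(x,h²)`. -/
theorem stmt_19 {X Y : Type*} [NormedAddCommGroup X] [NormedSpace ℝ X] [CompleteSpace X]
    [NormedAddCommGroup Y] [NormedSpace ℝ Y] [CompleteSpace Y]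
    (U : Set X) (V : Set Y) (hUo : IsOpen U) (hVo : IsOpen V)
    (F : X → Y) (G : Y → X) (hF : IsC11DiffeoOn F G U V)
    (g : X → ℝ) (x : X) (hx : x ∈ U)
    (hg : ∃ ε > 0, ball x ε ⊆ U ∧ ContDiffOn ℝ 1 g (ball x ε) ∧
      ∃ L : NNReal, LipschitzOnWith L (fun y => fderiv ℝ g y) (ball x ε))
    (Finv' : Y →L[ℝ] X)
    (hFinv' : Finv'.comp (fderiv ℝ F x) = ContinuousLinearMap.id ℝ X ∧
      (fderiv ℝ F x).comp Finv' = ContinuousLinearMap.id ℝ Y)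
    (h : X) (hker : fderiv ℝ g x h = 0) :
    lowD2p (g ∘ G) (F x) (fderiv ℝ F x h) (fderiv ℝ F x h) ≤
        lowD2p g x h h - lowD2p (fun y => fderiv ℝ g x (Finv' (F y))) x h h ∧
      lowD2p g x h h - lowD2p (fun y => fderiv ℝ g x (Finv' (F y))) x h h ≤
        upD2p (g ∘ G) (F x) (fderiv ℝ F x h) (fderiv ℝ F x h) := by
  obtain ⟨ε, hε, -, hg₁, L, hgL⟩ := hg
  obtain rfl := hF.fderiv_inverse_eq hUo hVo hx hFinv'.2
  exact stmt_19_general (hF.c11At hUo hx) (hF.symm.c11At hVo (hF.1 hx))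
    (hF.eventually_leftInverse hUo hx) (.of_mem_nhds (ball_mem_nhds x hε) hg₁ hgL) h h
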